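/- Drift lower bound for log-distance of the (1+1)-ES: for any measurable objective h on ℝ^d with d ≥ 2, any m ∈ ℝ^d with m ≠ 0, σ > 0, and z ∼ N(0, I_d), E[min{log(‖m + σz‖/‖m‖), 0}] ≥ −1/d. Consequently the one-step conditional expected decrease of log‖m_t‖ under the (1+1)-ES is at least −1/d, and (with the conditional-variance summability condition) the lower convergence rate satisfies exp(−CR^lower) ≥ exp(−1/d). -/

import Mathlib

open MeasureTheory ProbabilityTheory

noncomputable def stdGaussian (d : ℕ) : Measure (EuclideanSpace ℝ (Fin d)) :=
  Measure.map (⇑(EuclideanSpace.equiv (Fin d) ℝ).symm)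
    (Measure.pi fun _ : Fin d => gaussianReal 0 1)

/-!
Put `c = -(σ⁻¹ • m)`, so that `X = ‖m + σ • z‖ / ‖m‖` equals `‖z - c‖ / ‖c‖`. By the layer cake
formula, `E[-min (log X) 0] = ∫ t in (0, ∞), P(X ≤ exp (-t))`, which is at most
`∫ t in (0, ∞), exp (-d t) = 1 / d` as soon as `P(X ≤ r) ≤ r ^ d` for `0 < r < 1`. So it suffices
that the ball of radius `r ‖c‖` around `c` has mass at most `r ^ d`. The dilation of ratio `r⁻¹`
fixing `(1 + r) • c` does not increase the norm of any point of that ball, hence does not decrease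
the value of a radially decreasing density there; as it multiplies volumes by `r⁻¹ ^ d`, the mass of
the ball is at most `r ^ d` times the total mass.
-/

section LogarithmicMoment

lemma lintegral_Ioi_ofReal_exp_neg_rpow {s : ℝ} (hs : 0 < s) :
    ∫⁻ t in Set.Ioi (0 : ℝ), ENNReal.ofReal (Real.exp (-t) ^ s) = ENNReal.ofReal (1 / s) := by
  have hs' : -s < 0 := neg_neg_of_pos hs
  have hexp (t : ℝ) : Real.exp (-t) ^ s = Real.exp (-s * t) := by
    rw [← Real.exp_mul, neg_mul_comm, mul_comm]
  simp_rw [hexp]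
  rw [← ofReal_integral_eq_lintegral_ofReal (integrableOn_exp_mul_Ioi hs' 0)
    (ae_of_all _ fun t => (Real.exp_pos _).le), integral_exp_mul_Ioi hs']
  simp

variable {Ω : Type*} [MeasurableSpace Ω] {μ : Measure Ω} {X : Ω → ℝ} {s : ℝ}

lemma lintegral_ofReal_neg_min_log_le (hs : 0 < s) (hX : AEMeasurable X μ)
    (hsmall : ∀ r, 0 < r → r < 1 → μ {ω | X ω ≤ r} ≤ ENNReal.ofReal (r ^ s)) :
    ∫⁻ ω, ENNReal.ofReal (-min (Real.log (X ω)) 0) ∂μ ≤ ENNReal.ofReal (1 / s) := by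
  have hlevel {t : ℝ} (ht : 0 < t) :
      {ω | t ≤ -min (Real.log (X ω)) 0} ⊆ {ω | X ω ≤ Real.exp (-t)} := fun ω hω => by
    have hlog : Real.log (X ω) ≤ -t :=
      (min_le_iff.1 (le_neg.1 hω)).resolve_right (not_le.2 (neg_neg_of_pos ht))
    exact (Real.le_exp_log _).trans (Real.exp_le_exp.2 hlog)
  rw [lintegral_eq_lintegral_meas_le μ (ae_of_all _ fun ω => neg_nonneg.2 (min_le_right _ _))
    (by fun_prop), ← lintegral_Ioi_ofReal_exp_neg_rpow hs]
  refine setLIntegral_mono' measurableSet_Ioi fun t (ht : 0 < t) => ?_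
  exact (measure_mono (hlevel ht)).trans
    (hsmall _ (Real.exp_pos _) (Real.exp_lt_one_iff.2 (neg_neg_of_pos ht)))

lemma neg_one_div_le_integral_min_log (hs : 0 < s) (hX : AEMeasurable X μ)
    (hsmall : ∀ r, 0 < r → r < 1 → μ {ω | X ω ≤ r} ≤ ENNReal.ofReal (r ^ s)) :
    -(1 / s) ≤ ∫ ω, min (Real.log (X ω)) 0 ∂μ := by
  rw [neg_le, ← integral_neg, integral_eq_lintegral_of_nonneg_ae
    (ae_of_all _ fun ω => neg_nonneg.2 (min_le_right _ _))
    (by fun_prop : AEMeasurable _ μ).aestronglyMeasurable]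
  exact ENNReal.toReal_le_of_le_ofReal (by positivity)
    (lintegral_ofReal_neg_min_log_le hs hX hsmall)

end LogarithmicMoment

lemma norm_sub_one_sub_sq_smul_le {E : Type*} [NormedAddCommGroup E] [InnerProductSpace ℝ E]
    {c x : E} {r : ℝ} (hr₀ : 0 ≤ r) (hr₁ : r ≤ 1) (hx : ‖x - c‖ ≤ r * ‖c‖) :
    ‖x - (1 - r ^ 2) • c‖ ≤ r * ‖x‖ := by
  have apollonius : ‖x - (1 - r ^ 2) • c‖ ^ 2 =
      (r * ‖x‖) ^ 2 + (1 - r ^ 2) * (‖x - c‖ ^ 2 - (r * ‖c‖) ^ 2) := by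
    simp only [norm_sub_sq_real, inner_smul_right, norm_smul, mul_pow, Real.norm_eq_abs, sq_abs]
    ring
  have hsq : ‖x - c‖ ^ 2 ≤ (r * ‖c‖) ^ 2 := by gcongr
  refine le_of_sq_le_sq ?_ (by positivity)
  rw [apollonius]
  exact add_le_of_nonpos_right <|
    mul_nonpos_of_nonneg_of_nonpos (sub_nonneg.2 (pow_le_one₀ hr₀ hr₁)) (sub_nonpos.2 hsq)

/-- A density on a normed space is radially decreasing if it depends only on the norm, through a
nonincreasing function. This is encoded by comparing any two points; points of equal norm get equal
values because the comparison of norms is not strict. -/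
def IsRadiallyDecreasing {E : Type*} [Norm E] (ρ : E → ENNReal) : Prop :=
  ∀ ⦃x y : E⦄, ‖x‖ ≤ ‖y‖ → ρ y ≤ ρ x

section SmallBall

variable {E : Type*} [NormedAddCommGroup E] [InnerProductSpace ℝ E] [FiniteDimensional ℝ E]
  [MeasurableSpace E] [BorelSpace E] (μ : Measure E) [μ.IsAddHaarMeasure]

lemma lintegral_comp_inv_smul_sub (f : E → ENNReal) (a : E) {r : ℝ} (hr : 0 < r) :
    ∫⁻ x, f (r⁻¹ • (x - a)) ∂μ =
      ENNReal.ofReal (r ^ Module.finrank ℝ E) * ∫⁻ x, f x ∂μ := by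
  have hemb : MeasurableEmbedding fun x : E => r⁻¹ • x :=
    (Homeomorph.smulOfNeZero r⁻¹ (inv_ne_zero hr.ne')).measurableEmbedding
  rw [lintegral_sub_right_eq_self (fun x => f (r⁻¹ • x)) a, ← hemb.lintegral_map,
    Measure.map_addHaar_smul _ (inv_ne_zero hr.ne'), lintegral_smul_measure, inv_pow, inv_inv,
    abs_of_pos (pow_pos hr _), smul_eq_mul]

lemma IsRadiallyDecreasing.withDensity_closedBall_le {ρ : E → ENNReal}
    (hρ : IsRadiallyDecreasing ρ) (c : E) {r : ℝ} (hr₀ : 0 < r) (hr₁ : r ≤ 1) :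
    μ.withDensity ρ (Metric.closedBall c (r * ‖c‖)) ≤
      ENNReal.ofReal (r ^ Module.finrank ℝ E) * ∫⁻ x, ρ x ∂μ := by
  have hdilate {x : E} (hx : x ∈ Metric.closedBall c (r * ‖c‖)) :
      ρ x ≤ ρ (r⁻¹ • (x - (1 - r ^ 2) • c)) := hρ <| by
    rw [norm_smul, norm_inv, Real.norm_of_nonneg hr₀.le, inv_mul_le_iff₀ hr₀]
    exact norm_sub_one_sub_sq_smul_le hr₀.le hr₁ (mem_closedBall_iff_norm.1 hx)
  rw [withDensity_apply _ measurableSet_closedBall]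
  calc ∫⁻ x in Metric.closedBall c (r * ‖c‖), ρ x ∂μ
      ≤ ∫⁻ x in Metric.closedBall c (r * ‖c‖), ρ (r⁻¹ • (x - (1 - r ^ 2) • c)) ∂μ :=
        setLIntegral_mono' measurableSet_closedBall fun x hx => hdilate hx
    _ ≤ ∫⁻ x, ρ (r⁻¹ • (x - (1 - r ^ 2) • c)) ∂μ := setLIntegral_le_lintegral _ _
    _ = ENNReal.ofReal (r ^ Module.finrank ℝ E) * ∫⁻ x, ρ x ∂μ :=
        lintegral_comp_inv_smul_sub μ ρ _ hr₀

lemma IsRadiallyDecreasing.neg_one_div_finrank_le_integral_min_log {ρ : E → ENNReal}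
    (hρ : IsRadiallyDecreasing ρ) [IsProbabilityMeasure (μ.withDensity ρ)] {c : E} (hc : c ≠ 0) :
    -(1 / (Module.finrank ℝ E : ℝ)) ≤
      ∫ z, min (Real.log (‖z - c‖ / ‖c‖)) 0 ∂(μ.withDensity ρ) := by
  have hdim : 0 < Module.finrank ℝ E := Module.finrank_pos_iff_exists_ne_zero.2 ⟨c, hc⟩
  have hmass : ∫⁻ z, ρ z ∂μ = 1 := by
    rw [← setLIntegral_univ, ← withDensity_apply _ .univ, measure_univ]
  refine neg_one_div_le_integral_min_log (by exact_mod_cast hdim) (by fun_prop)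
    fun r hr₀ hr₁ => ?_
  have hball : {z | ‖z - c‖ / ‖c‖ ≤ r} = Metric.closedBall c (r * ‖c‖) := by
    ext z
    rw [Set.mem_ofPred_eq, div_le_iff₀ (norm_pos_iff.2 hc), mem_closedBall_iff_norm]
  simpa only [hball, Real.rpow_natCast, hmass, mul_one] using
    hρ.withDensity_closedBall_le μ c hr₀ hr₁.le

theorem stmt_19_general {ρ : E → ENNReal} (hρ : IsRadiallyDecreasing ρ)
    [IsProbabilityMeasure (μ.withDensity ρ)] {m : E} (hm : m ≠ 0) (σ : ℝ) :
    -(1 / (Module.finrank ℝ E : ℝ)) ≤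
      ∫ z, min (Real.log (‖m + σ • z‖ / ‖m‖)) 0 ∂(μ.withDensity ρ) := by
  rcases eq_or_ne σ 0 with rfl | hσ
  · simp [hm]
  have hratio (z : E) : ‖m + σ • z‖ / ‖m‖ = ‖z - -(σ⁻¹ • m)‖ / ‖-(σ⁻¹ • m)‖ := by
    have hz : z - -(σ⁻¹ • m) = σ⁻¹ • (m + σ • z) := by
      rw [smul_add, inv_smul_smul₀ hσ, sub_neg_eq_add, add_comm]
    rw [hz, norm_neg, norm_smul, norm_smul,
      mul_div_mul_left _ _ (norm_ne_zero_iff.2 (inv_ne_zero hσ))]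
  simp only [hratio]
  exact hρ.neg_one_div_finrank_le_integral_min_log μ
    (neg_ne_zero.2 (smul_ne_zero (inv_ne_zero hσ) hm))

end SmallBall

section GaussianDensity

lemma pi_withDensity_ofReal {ι : Type*} [Fintype ι] {α : ι → Type*}
    [∀ i, MeasurableSpace (α i)] {μ : ∀ i, Measure (α i)} [∀ i, SigmaFinite (μ i)]
    {f : ∀ i, α i → ℝ} (hf : ∀ i, Integrable (f i) (μ i)) (hf₀ : ∀ i x, 0 ≤ f i x) :
    Measure.pi (fun i => (μ i).withDensity fun x => ENNReal.ofReal (f i x)) =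
      (Measure.pi μ).withDensity fun x => ENNReal.ofReal (∏ i, f i (x i)) := by
  have (i : ι) : IsFiniteMeasure ((μ i).withDensity fun x => ENNReal.ofReal (f i x)) :=
    isFiniteMeasure_withDensity_ofReal (hf i).2
  refine Measure.pi_eq fun s hs => ?_
  rw [withDensity_apply _ (.univ_pi hs), Measure.restrict_pi_pi,
    ← ofReal_integral_eq_lintegral_ofReal (.fintype_prod_dep fun i => (hf i).restrict)
      (ae_of_all _ fun x => Finset.prod_nonneg fun i _ => hf₀ i (x i)),
    integral_fintype_prod_eq_prod,
    ENNReal.ofReal_prod_of_nonneg fun i _ => integral_nonneg (hf₀ i)]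
  refine Finset.prod_congr rfl fun i _ => ?_
  rw [withDensity_apply _ (hs i),
    ofReal_integral_eq_lintegral_ofReal (hf i).restrict (ae_of_all _ (hf₀ i))]

lemma map_withDensity_comp_of_measurePreserving {α β : Type*} [MeasurableSpace α]
    [MeasurableSpace β] {μ : Measure α} {ν : Measure β} {g : α → β} {f : β → ENNReal}
    (hg : MeasurePreserving g μ ν) (hf : Measurable f) :
    (μ.withDensity (f ∘ g)).map g = ν.withDensity f := by
  ext s hs
  rw [Measure.map_apply hg.measurable hs, withDensity_apply _ (hg.measurable hs),
    withDensity_apply _ hs]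
  exact hg.setLIntegral_comp_preimage hs hf

lemma prod_gaussianPDFReal_zero_one {ι : Type*} [Fintype ι] (x : EuclideanSpace ℝ ι) :
    ∏ i, gaussianPDFReal 0 1 (x i) =
      (√(2 * Real.pi))⁻¹ ^ Fintype.card ι * Real.exp (-‖x‖ ^ 2 / 2) := by
  simp [gaussianPDFReal, Finset.prod_mul_distrib, ← Real.exp_sum, ← Finset.sum_div,
    EuclideanSpace.real_norm_sq_eq]

/-- The density of the standard Gaussian measure on `ℝᵈ` with respect to Lebesgue measure. -/
noncomputable def stdGaussianPDF (d : ℕ) (x : EuclideanSpace ℝ (Fin d)) : ENNReal :=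
  ENNReal.ofReal ((√(2 * Real.pi))⁻¹ ^ d * Real.exp (-‖x‖ ^ 2 / 2))

lemma isRadiallyDecreasing_stdGaussianPDF (d : ℕ) : IsRadiallyDecreasing (stdGaussianPDF d) := by
  intro x y hxy
  unfold stdGaussianPDF
  gcongr

lemma pi_gaussianReal_zero_one_eq_withDensity (d : ℕ) :
    (Measure.pi fun _ : Fin d => gaussianReal 0 1) =
      volume.withDensity (stdGaussianPDF d ∘ WithLp.toLp 2) := by
  have hpdf : stdGaussianPDF d ∘ WithLp.toLp 2 =
      fun x => ENNReal.ofReal (∏ i, gaussianPDFReal 0 1 (x i)) := by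
    funext x
    simpa [stdGaussianPDF] using
      congrArg ENNReal.ofReal (prod_gaussianPDFReal_zero_one (WithLp.toLp 2 x)).symm
  rw [hpdf, gaussianReal_of_var_ne_zero 0 one_ne_zero]
  exact pi_withDensity_ofReal (fun _ => integrable_gaussianPDFReal 0 1)
    (fun _ => gaussianPDFReal_nonneg 0 1)

lemma stdGaussian_eq_withDensity (d : ℕ) :
    stdGaussian d = volume.withDensity (stdGaussianPDF d) := by
  have hmeas : Measurable (stdGaussianPDF d) := by
    unfold stdGaussianPDF
    fun_prop
  rw [_root_.stdGaussian, pi_gaussianReal_zero_one_eq_withDensity]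
  exact map_withDensity_comp_of_measurePreserving (PiLp.volume_preserving_toLp (Fin d)) hmeas

instance isProbabilityMeasure_withDensity_stdGaussianPDF (d : ℕ) :
    IsProbabilityMeasure (volume.withDensity (stdGaussianPDF d)) := by
  rw [← stdGaussian_eq_withDensity]
  exact Measure.isProbabilityMeasure_map (by fun_prop)

end GaussianDensity

theorem stmt_19 {d : ℕ} (hd : 2 ≤ d)
    (m : EuclideanSpace ℝ (Fin d)) (hm : m ≠ 0) (σ : ℝ) (hσ : 0 < σ) :
    -(1 / (d : ℝ)) ≤
      ∫ z, min (Real.log (‖m + σ • z‖ / ‖m‖)) 0 ∂(stdGaussian d) := by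
  simpa only [stdGaussian_eq_withDensity, finrank_euclideanSpace_fin] using
    stmt_19_general volume (isRadiallyDecreasing_stdGaussianPDF d) hm σ
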